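/- Let f : B → A be a homomorphism of commutative rings. The following are equivalent: (1) f is pure as a morphism of B-modules; (2) for every B-module N the unit map η_N : N → (N ⊗_B A)^co, η_N(n) = n ⊗ 1, is bijective, and for every comodule (M, ρ) over the canonical coring A ⊗_B A the counit map ζ_M : M^co ⊗_B A → M, ζ_M(m ⊗ a) = m·a, is bijective. (This is the commutative Joyal–Tierney theorem: descent along f is effective if and only if f is pure.) -/

import Mathlib

open TensorProduct

universe u

noncomputable def unitMap (B A : Type u) [CommRing B] [CommRing A] [Algebra B A]
    (N : Type u) [AddCommGroup N] [Module B N] : N →ₗ[B] N ⊗[B] A :=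
  (TensorProduct.mk B N A).flip 1

/-- The action map `M ⊗_B A → M`, `m ⊗ a ↦ m · a`. -/
noncomputable def actionMap (B A : Type u) [CommRing B] [CommRing A] [Algebra B A]
    (M : Type u) [AddCommGroup M] [Module B M] [Module A M] [IsScalarTower B A M] :
    M ⊗[B] A →ₗ[B] M :=
  TensorProduct.lift (LinearMap.mk₂ B (fun m a => a • m)
    (fun m m' a => smul_add a m m')
    (fun b m a => smul_comm a b m)
    (fun m a a' => add_smul a a' m)
    (fun b m a => smul_assoc b a m))

/-- `(M, ρ)` is a comodule over the canonical coring `A ⊗_B A`. -/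
def IsCanComodule (B A : Type u) [CommRing B] [CommRing A] [Algebra B A]
    (M : Type u) [AddCommGroup M] [Module B M] [Module A M] [IsScalarTower B A M]
    (ρ : M →ₗ[B] M ⊗[B] A) : Prop :=
  (∀ (a : A) (m : M),
      ρ (a • m) = LinearMap.lTensor M (LinearMap.mulLeft B a) (ρ m)) ∧
  (∀ m : M, LinearMap.rTensor A ρ (ρ m) = LinearMap.rTensor A (unitMap B A M) (ρ m)) ∧
  (∀ m : M, actionMap B A M (ρ m) = m)

/-- The coinvariants `M^co = {m : ρ m = m ⊗ 1}` as a `B`-submodule. -/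
noncomputable def coinv (B A : Type u) [CommRing B] [CommRing A] [Algebra B A]
    (M : Type u) [AddCommGroup M] [Module B M] [Module A M] [IsScalarTower B A M]
    (ρ : M →ₗ[B] M ⊗[B] A) : Submodule B M where
  carrier := {m | ρ m = m ⊗ₜ[B] 1}
  add_mem' := by
    intro x y hx hy
    simp only [Set.mem_setOf_eq] at *
    rw [map_add, hx, hy, add_tmul]
  zero_mem' := by simp
  smul_mem' := by
    intro b m hm
    simp only [Set.mem_setOf_eq] at *
    rw [map_smul, hm, smul_tmul']

/-- The counit map `ζ_M : M^co ⊗_B A → M`, `m ⊗ a ↦ m · a`. -/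
noncomputable def counitMap (B A : Type u) [CommRing B] [CommRing A] [Algebra B A]
    (M : Type u) [AddCommGroup M] [Module B M] [Module A M] [IsScalarTower B A M]
    (ρ : M →ₗ[B] M ⊗[B] A) : (coinv B A M ρ) ⊗[B] A →ₗ[B] M :=
  actionMap B A M ∘ₗ LinearMap.rTensor A (coinv B A M ρ).subtype

theorem exists_char_comp {B M P : Type u} [CommRing B] [AddCommGroup M] [AddCommGroup P]
    [Module B M] [Module B P] (g : M →ₗ[B] P) (φ : CharacterModule M)
    (h : ∀ m, g m = 0 → φ m = 0) : ∃ ω : CharacterModule P, ∀ m, ω (g m) = φ m := by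
  let K := LinearMap.ker g
  have hinj : Function.Injective (K.liftQ g le_rfl) := by
    rw [← LinearMap.ker_eq_bot]
    exact Submodule.ker_liftQ_eq_bot _ _ _ le_rfl
  let φ₂ : CharacterModule (M ⧸ K) :=
    QuotientAddGroup.lift K.toAddSubgroup (φ : M →+ AddCircle (1 : ℚ)) (fun m hm => h m hm)
  obtain ⟨ω, hω⟩ := CharacterModule.dual_surjective_of_injective _ hinj φ₂
  refine ⟨ω, fun m => ?_⟩
  exact congr($hω (Submodule.Quotient.mk m))

/-- `ψ ↦ (n ↦ (b ↦ ψ (b n)))`. -/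
noncomputable def charLift (B N : Type u) [CommRing B] [AddCommGroup N] [Module B N] :
    CharacterModule N →ₗ[B] (N →ₗ[B] CharacterModule B) :=
  CharacterModule.curry ∘ₗ CharacterModule.dual (TensorProduct.rid B N).toLinearMap

theorem charLift_apply (B N : Type u) [CommRing B] [AddCommGroup N] [Module B N]
    (ψ : CharacterModule N) (n : N) (b : B) : charLift B N ψ n b = ψ (b • n) := by
  rfl

/-- the natural section of `D(N ⊗ A) → D(N)` -/
noncomputable def sec (B A : Type u) [CommRing B] [CommRing A] [Algebra B A]
    (θ : CharacterModule (CharacterModule B ⊗[B] A))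
    (N : Type u) [AddCommGroup N] [Module B N] :
    CharacterModule N →ₗ[B] CharacterModule (N ⊗[B] A) where
  toFun ψ := CharacterModule.dual (LinearMap.rTensor A (charLift B N ψ)) θ
  map_add' ψ ψ₂ := by
    ext x
    change θ (LinearMap.rTensor A (charLift B N (ψ + ψ₂)) x) =
      θ (LinearMap.rTensor A (charLift B N ψ) x) + θ (LinearMap.rTensor A (charLift B N ψ₂) x)
    rw [map_add, LinearMap.rTensor_add, LinearMap.add_apply, map_add]
  map_smul' b ψ := by
    ext x
    change θ (LinearMap.rTensor A (charLift B N (b • ψ)) x) =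
      θ (LinearMap.rTensor A (charLift B N ψ) (b • x))
    rw [map_smul, LinearMap.rTensor_smul, LinearMap.smul_apply, LinearMap.map_smul]

theorem sec_apply (B A : Type u) [CommRing B] [CommRing A] [Algebra B A]
    (θ : CharacterModule (CharacterModule B ⊗[B] A))
    (N : Type u) [AddCommGroup N] [Module B N] (ψ : CharacterModule N) (x : N ⊗[B] A) :
    sec B A θ N ψ x = θ (LinearMap.rTensor A (charLift B N ψ) x) := rfl

theorem sec_unit (B A : Type u) [CommRing B] [CommRing A] [Algebra B A]
    (θ : CharacterModule (CharacterModule B ⊗[B] A))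
    (hθ : ∀ φ : CharacterModule B, θ (φ ⊗ₜ 1) = φ 1)
    (N : Type u) [AddCommGroup N] [Module B N] (ψ : CharacterModule N) (n : N) :
    sec B A θ N ψ (n ⊗ₜ 1) = ψ n := by
  rw [sec_apply, LinearMap.rTensor_tmul, hθ, charLift_apply, one_smul]

theorem sec_nat (B A : Type u) [CommRing B] [CommRing A] [Algebra B A]
    (θ : CharacterModule (CharacterModule B ⊗[B] A))
    (N N₂ : Type u) [AddCommGroup N] [Module B N] [AddCommGroup N₂] [Module B N₂]
    (g : N →ₗ[B] N₂) (ψ : CharacterModule N) (ψ₂ : CharacterModule N₂)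
    (h : ∀ n, ψ n = ψ₂ (g n)) (x : N ⊗[B] A) :
    sec B A θ N ψ x = sec B A θ N₂ ψ₂ (LinearMap.rTensor A g x) := by
  have : charLift B N ψ = charLift B N₂ ψ₂ ∘ₗ g := by
    ext n b
    rw [LinearMap.comp_apply, charLift_apply, charLift_apply, h, map_smul]
  rw [sec_apply, sec_apply, this, LinearMap.rTensor_comp, LinearMap.comp_apply]

theorem exists_theta (B A : Type u) [CommRing B] [CommRing A] [Algebra B A]
    (h : Function.Injective (unitMap B A (CharacterModule B))) :
    ∃ θ : CharacterModule (CharacterModule B ⊗[B] A),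
      ∀ φ : CharacterModule B, θ (φ ⊗ₜ 1) = φ 1 := by
  let ev : CharacterModule (CharacterModule B) :=
    { toFun := fun φ => φ 1
      map_zero' := rfl
      map_add' := fun _ _ => rfl }
  obtain ⟨θ, hθ⟩ := CharacterModule.dual_surjective_of_injective _ h ev
  exact ⟨θ, fun φ => congr($hθ φ)⟩

theorem range_unit (B A : Type u) [CommRing B] [CommRing A] [Algebra B A]
    (h : ∀ (N : Type u) [AddCommGroup N] [Module B N], Function.Injective (unitMap B A N))
    (N : Type u) [AddCommGroup N] [Module B N] :
    Set.range (unitMap B A N) =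
          {q : N ⊗[B] A |
            LinearMap.rTensor A (unitMap B A N) q = unitMap B A (N ⊗[B] A) q} := by
  ext q
  constructor
  · rintro ⟨n, rfl⟩
    simp [unitMap]
  · intro hq
    simp only [Set.mem_setOf_eq] at hq
    let R := LinearMap.range (unitMap B A N)
    have h0 : LinearMap.rTensor A R.mkQ (LinearMap.rTensor A (unitMap B A N) q) = 0 := by
      rw [← LinearMap.comp_apply, ← LinearMap.rTensor_comp, LinearMap.range_mkQ_comp]
      simp
    rw [hq] at h0
    have h1 : unitMap B A _ (R.mkQ q) = 0 := by
      rw [← h0]; simp [unitMap]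
    have h2 : R.mkQ q = 0 := h _ (by rw [h1, map_zero])
    exact (Submodule.Quotient.mk_eq_zero R).1 h2

theorem counit_bij (B A : Type u) [CommRing B] [CommRing A] [Algebra B A]
    (θ : CharacterModule (CharacterModule B ⊗[B] A))
    (hθ : ∀ φ : CharacterModule B, θ (φ ⊗ₜ 1) = φ 1)
    (M : Type u) [AddCommGroup M] [Module B M] [Module A M] [IsScalarTower B A M]
    (ρ : M →ₗ[B] M ⊗[B] A) (hρ : IsCanComodule B A M ρ) :
    Function.Bijective (counitMap B A M ρ) := by
  obtain ⟨hlin, hco, hcu⟩ := hρ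
  let K := coinv B A M ρ
  have hK : ∀ m : M, m ∈ K ↔ ρ m = m ⊗ₜ 1 := fun m => Iff.rfl
  let e : CharacterModule M →ₗ[B] CharacterModule M := CharacterModule.dual ρ ∘ₗ sec B A θ M
  have he : ∀ φ m, e φ m = sec B A θ M φ (ρ m) := fun _ _ => rfl
  have heK : ∀ φ, ∀ k ∈ K, e φ k = φ k := by
    intro φ k hk
    rw [he, (hK k).1 hk, sec_unit _ _ _ hθ]
  have hker : ∀ φ : CharacterModule M, (∀ k ∈ K, φ k = 0) → e φ = 0 := by
    intro φ hφ
    obtain ⟨ω, hω⟩ := exists_char_comp (ρ - unitMap B A M) φ (fun m hm => hφ m (by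
      rw [hK]; exact sub_eq_zero.1 hm))
    ext m
    let ω₁ : CharacterModule M := CharacterModule.dual ρ ω
    let ω₂ : CharacterModule M := CharacterModule.dual (unitMap B A M) ω
    have hφ₂ : φ = ω₁ - ω₂ := by
      ext m
      rw [← hω, LinearMap.sub_apply, map_sub]; rfl
    have h1 := sec_nat B A θ _ _ ρ ω₁ ω (fun _ => rfl) (ρ m)
    have h2 := sec_nat B A θ _ _ (unitMap B A M) ω₂ ω (fun _ => rfl) (ρ m)
    rw [hφ₂, map_sub]
    change e ω₁ m - e ω₂ m = 0
    rw [he, he, h1, h2, hco, sub_self]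
  have hρζ : ∀ x, ρ (counitMap B A M ρ x) = LinearMap.rTensor A K.subtype x := by
    intro x
    induction x with
    | zero => simp
    | add x y hx hy => rw [map_add, map_add, map_add, hx, hy]
    | tmul k a =>
      have : counitMap B A M ρ (k ⊗ₜ a) = a • (k : M) := rfl
      rw [this, hlin, (hK k).1 k.2]
      simp
  constructor
  · obtain ⟨t, ht⟩ : ∃ t : CharacterModule K →ₗ[B] CharacterModule M,
        ∀ φ (k : K), t φ k = φ k := by
      have hs : Function.Surjective (CharacterModule.dual K.subtype) :=
        CharacterModule.dual_surjective_of_injective _ K.injective_subtype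
      have hwell : ∀ φ φ₂ : CharacterModule M, (∀ k : K, φ k = φ₂ k) → e φ = e φ₂ := by
        intro φ φ₂ h
        rw [← sub_eq_zero, ← map_sub]
        exact hker _ (fun k hk => sub_eq_zero.2 (h ⟨k, hk⟩))
      choose r hr using hs
      have hr' : ∀ φ (k : K), r φ k = φ k := fun φ k => congr($(hr φ) k)
      refine ⟨⟨⟨fun φ => e (r φ), ?_⟩, ?_⟩, ?_⟩
      · intro φ φ₂
        rw [← map_add]
        refine hwell _ _ fun k => ?_
        rw [hr']
        change φ k + φ₂ k = r φ k + r φ₂ k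
        rw [hr', hr']
      · intro b φ
        simp only [RingHom.id_apply]
        rw [← map_smul]
        refine hwell _ _ fun k => ?_
        rw [hr', CharacterModule.smul_apply, CharacterModule.smul_apply, ← hr']
        rfl
      · intro φ k
        change e (r φ) k = _
        rw [heK _ _ k.2, hr']
    rw [injective_iff_map_eq_zero]
    intro x hx
    have hx' : LinearMap.rTensor A K.subtype x = 0 := by rw [← hρζ, hx, map_zero]
    refine CharacterModule.eq_zero_of_character_apply fun χ => ?_
    let c : A →ₗ[B] CharacterModule K :=
      CharacterModule.curry (CharacterModule.dual (TensorProduct.comm B A K).toLinearMap χ)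
    let χ₂ : CharacterModule (M ⊗[B] A) :=
      CharacterModule.dual (TensorProduct.comm B M A).toLinearMap
        (CharacterModule.uncurry (t ∘ₗ c))
    have key : ∀ y, χ₂ (LinearMap.rTensor A K.subtype y) = χ y := by
      intro y
      induction y with
      | zero => simp only [map_zero]
      | add x y hx hy => rw [map_add, map_add, map_add, hx, hy]
      | tmul k a => exact ht (c a) k
    rw [← key, hx', map_zero]
  · refine CharacterModule.surjective_of_dual_injective _ ?_
    rw [injective_iff_map_eq_zero]
    intro χ hχ
    have hχ₂ : ∀ (k : K) (a : A), χ (a • (k : M)) = 0 := fun k a => congr($hχ (k ⊗ₜ a))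
    let c : A →ₗ[B] CharacterModule M :=
      CharacterModule.curry (CharacterModule.dual (TensorProduct.comm B A M).toLinearMap
        (CharacterModule.dual (actionMap B A M) χ))
    have hc : ∀ a m, c a m = χ (a • m) := fun _ _ => rfl
    have hec : ∀ a, e (c a) = 0 := fun a => hker _ fun k hk => hχ₂ ⟨k, hk⟩ a
    let W : CharacterModule ((M ⊗[B] A) ⊗[B] A) :=
      CharacterModule.dual (TensorProduct.comm B (M ⊗[B] A) A).toLinearMap
        (CharacterModule.uncurry (sec B A θ M ∘ₗ c))
    have hW : ∀ (y : M ⊗[B] A) (a : A), W (y ⊗ₜ a) = sec B A θ M (c a) y := fun _ _ => rfl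
    have h1 : ∀ y, W (LinearMap.rTensor A ρ y) = 0 := by
      intro y
      induction y with
      | zero => simp only [map_zero]
      | add x y hx hy => rw [map_add, map_add, hx, hy, add_zero]
      | tmul m a =>
        rw [LinearMap.rTensor_tmul, hW, ← he, hec]; rfl
    have h2 : ∀ y, W (LinearMap.rTensor A (unitMap B A M) y) = χ (actionMap B A M y) := by
      intro y
      induction y with
      | zero => simp only [map_zero]
      | add x y hx hy => rw [map_add, map_add, map_add, map_add, hx, hy]
      | tmul m a =>
        rw [LinearMap.rTensor_tmul, hW]
        exact sec_unit _ _ _ hθ _ _ _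
    ext m
    rw [← hcu m, ← h2, ← hco, h1]; rfl

/-- Commutative Joyal–Tierney theorem: `f : B → A` is pure as a morphism of `B`-modules
if and only if descent along `f` is effective, i.e. all unit maps
`η_N : N → (N ⊗_B A)^co` and all counit maps `ζ_M : M^co ⊗_B A → M` are bijective. -/
theorem pure_iff_descent_effective
    (B A : Type u) [CommRing B] [CommRing A] [Algebra B A] :
    (∀ (N : Type u) [AddCommGroup N] [Module B N],
        Function.Injective (unitMap B A N)) ↔
    ((∀ (N : Type u) [AddCommGroup N] [Module B N],
        Function.Injective (unitMap B A N) ∧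
        Set.range (unitMap B A N) =
          {q : N ⊗[B] A |
            LinearMap.rTensor A (unitMap B A N) q = unitMap B A (N ⊗[B] A) q}) ∧
     (∀ (M : Type u) [AddCommGroup M] [Module B M] [Module A M] [IsScalarTower B A M]
        (ρ : M →ₗ[B] M ⊗[B] A), IsCanComodule B A M ρ →
        Function.Bijective (counitMap B A M ρ))) := by
  constructor
  · intro h
    obtain ⟨θ, hθ⟩ := exists_theta B A (h _)
    refine ⟨fun N _ _ => ⟨h N, range_unit B A h N⟩, ?_⟩
    intro M _ _ _ _ ρ hρ
    exact counit_bij B A θ hθ M ρ hρ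
  · intro h N _ _
    exact (h.1 N).1
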